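/- The strong separation condition fails for {S_i}_{i=1}^m if and only if there exists an infinite directed path in the graph G starting from a point of Λ, i.e., there exist v ∈ Λ and a function f : ℕ → Ξ with f(0) = v and an edge of G from f(n) to f(n+1) for every n. -/

import Mathlib

open Polynomial Filter

noncomputable section

namespace PVOSC

variable {m : ℕ}

/-- `λ⁻¹` is a Pisot (P.V.) number: an algebraic integer `> 1` all of whose
Galois conjugates other than itself have complex absolute value `< 1`. -/
def IsPisot (θ : ℝ) : Prop :=
  1 < θ ∧ IsIntegral ℤ θ ∧
    ∀ z : ℂ, aeval z (minpoly ℤ θ) = 0 → z ≠ (θ : ℂ) → ‖z‖ < 1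

/-- `p_σ` for a finite word `σ`. -/
def wordP (p : Fin m → ℕ) (σ : List (Fin m)) : ℕ := (σ.map p).sum

/-- The contracting similitude `S_i(x) = λ^{p_i} x + b_i`. -/
def Smap (lam : ℝ) (p : Fin m → ℕ) (b : Fin m → ℝ) (i : Fin m) : ℝ → ℝ :=
  fun x => lam ^ p i * x + b i

/-- `S_σ = S_{i₁} ∘ ⋯ ∘ S_{i_k}` for `σ = i₁ ⋯ i_k`. -/
def SW (lam : ℝ) (p : Fin m → ℕ) (b : Fin m → ℝ) (σ : List (Fin m)) : ℝ → ℝ :=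
  σ.foldr (fun i f => Smap lam p b i ∘ f) id

/-- `b_σ`, the translation part of `S_σ`. -/
def wordB (lam : ℝ) (p : Fin m → ℕ) (b : Fin m → ℝ) (σ : List (Fin m)) : ℝ :=
  SW lam p b σ 0

/-- `B = {0, b₁, …, b_m}`. -/
def Bset (b : Fin m → ℝ) : Set ℝ := insert 0 (Set.range b)

/-- `B − B`. -/
def BB (b : Fin m → ℝ) : Set ℝ := {x | ∃ u ∈ Bset b, ∃ v ∈ Bset b, x = u - v}

/-- `max_i |b_i|`. -/
def bmax (b : Fin m → ℝ) : ℝ := ⨆ i, |b i|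

/-- The set `𝒞`. -/
def Cset (lam : ℝ) (b : Fin m → ℝ) (T : ℕ) : Set ℝ :=
  {x | |x| ≤ (1 + lam ^ (1 - (T : ℤ))) * bmax b / (1 - lam) ∧
    ∃ R : ℝ[X], (∀ n, R.coeff n ∈ BB b) ∧ lam ^ (2 - (T : ℤ)) * x = R.eval lam⁻¹}

/-- The vertex set `Ξ = {n ∈ ℤ : |n| ≤ T−1} × 𝒞`. -/
def Xi (lam : ℝ) (b : Fin m → ℝ) (T : ℕ) : Set (ℤ × ℝ) :=
  {v | |v.1| ≤ (T : ℤ) - 1 ∧ v.2 ∈ Cset lam b T}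

/-- The open set condition. -/
def OSC (lam : ℝ) (p : Fin m → ℕ) (b : Fin m → ℝ) : Prop :=
  ∃ U : Set ℝ, U.Nonempty ∧ IsOpen U ∧ (⋃ i, Smap lam p b i '' U) ⊆ U ∧
    ∀ i j : Fin m, i ≠ j → Smap lam p b i '' U ∩ Smap lam p b j '' U = ∅

/-- The strong separation condition for the attractor `E`. -/
def SSC (lam : ℝ) (p : Fin m → ℕ) (b : Fin m → ℝ) (E : Set ℝ) : Prop :=
  ∀ i j : Fin m, i ≠ j → Smap lam p b i '' E ∩ Smap lam p b j '' E = ∅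

/-- Group law on `ℤ × ℝ`: `(p₁,c₁)·(p₂,c₂) = (p₁+p₂, λ^{p₁} c₂ + c₁)`. -/
def gmul (lam : ℝ) (u v : ℤ × ℝ) : ℤ × ℝ := (u.1 + v.1, lam ^ u.1 * v.2 + u.2)

/-- Inverse for the group law: `(p,c)⁻¹ = (−p, −λ^{−p} c)`. -/
def ginv (lam : ℝ) (u : ℤ × ℝ) : ℤ × ℝ := (-u.1, -(lam ^ (-u.1) * u.2))

/-- The group element `(p_σ, b_σ)` associated to a finite word `σ`. -/
def elem (lam : ℝ) (p : Fin m → ℕ) (b : Fin m → ℝ) (σ : List (Fin m)) : ℤ × ℝ :=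
  ((wordP p σ : ℤ), wordB lam p b σ)

/-- The sequence `(q_k, c_k)` with the recursive structure w.r.t. `({α_k}, {β_k})`:
`recSeq … k = (q_{k+1}, c_{k+1})`, i.e. index `k` corresponds to `(q_{k+1}, c_{k+1})`. -/
def recSeq (lam : ℝ) (p : Fin m → ℕ) (b : Fin m → ℝ) (α β : ℕ → List (Fin m)) : ℕ → ℤ × ℝ
  | 0 => gmul lam (ginv lam (elem lam p b (β 0))) (elem lam p b (α 0))
  | (k+1) => gmul lam (ginv lam (elem lam p b (β (k+1))))
      (gmul lam (recSeq lam p b α β k) (elem lam p b (α (k+1))))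

/-- The edge relation of the directed graph `G` on `Ξ`. -/
def edge (lam : ℝ) (p : Fin m → ℕ) (b : Fin m → ℝ) (T : ℕ) (u v : ℤ × ℝ) : Prop :=
  u ∈ Xi lam b T ∧ v ∈ Xi lam b T ∧
    ∃ α β : List (Fin m), 1 ≤ wordP p α ∧ wordP p α ≤ 2 * T - 1 ∧
      1 ≤ wordP p β ∧ wordP p β ≤ 2 * T - 1 ∧
      v.1 = (wordP p α : ℤ) + u.1 - (wordP p β : ℤ) ∧
      v.2 = lam ^ (-(wordP p β : ℤ)) * u.2 + lam ^ (u.1 - (wordP p β : ℤ)) * wordB lam p b α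
        - lam ^ (-(wordP p β : ℤ)) * wordB lam p b β

/-- `Λ = Ξ ∩ {(p_j − p_i, λ^{−p_i}(b_j − b_i)) : i ≠ j}`. -/
def Lam (lam : ℝ) (p : Fin m → ℕ) (b : Fin m → ℝ) (T : ℕ) : Set (ℤ × ℝ) :=
  Xi lam b T ∩ {v | ∃ i j : Fin m, i ≠ j ∧
    v = ((p j : ℤ) - (p i : ℤ), lam ^ (-(p i : ℤ)) * (b j - b i))}

/-- The length-`k` prefix of an infinite word `ω`. -/
def prefixList (ω : ℕ → Fin m) (k : ℕ) : List (Fin m) := (List.range k).map ω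

/-! The group `(ℤ × ℝ, gmul)` acts on the line by `(q, c) • x = λ^q x + c`, and the element
`elem σ` of a word acts as `S_σ`. Hence `S_σ(E)` and `S_τ(E)` meet exactly when
`v = (elem σ)⁻¹ (elem τ)` moves some point of `E` into `E`, and an edge of `G` is a step
`v ↦ (elem β)⁻¹ v (elem α)`, which replaces `(σ, τ)` by `(σβ, τα)`.

If `x ∈ E` and `v • x ∈ E`, extend the codings of `v • x` and `x` by words `β` and `α` chosen to
keep the total exponents within `T - 1` of each other. The new element again moves a point of `E`
into `E`, and all elements so obtained lie in `Ξ`, so this produces an infinite path. Conversely,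
along an infinite path `S_τα(x₀) - S_σβ(x₀) = λ^{p_σβ} (v • x₀ - x₀)` tends to `0` because `Ξ` is
bounded, so the compact sets `S_σ(E)` and `S_τ(E)` meet. -/

lemma inter_nonempty_of_forall_exists_dist_lt {X : Type*} [PseudoMetricSpace X] {s t : Set X}
    (hs : IsCompact s) (ht : IsClosed t)
    (h : ∀ ε > 0, ∃ x ∈ s, ∃ y ∈ t, dist x y < ε) : (s ∩ t).Nonempty := by
  rw [← Set.not_disjoint_iff_nonempty_inter]
  intro hst
  obtain ⟨r, hr, hlt⟩ := Metric.exists_pos_forall_lt_edist hs ht hst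
  obtain ⟨x, hx, y, hy, hxy⟩ := h r hr
  have hry := hlt x hx y hy
  rw [edist_nndist, ENNReal.coe_lt_coe] at hry
  exact hxy.not_gt hry

section Group

variable {lam : ℝ}

/-- The action of the group `(ℤ × ℝ, gmul)` on the line; `elem σ` acts as `S_σ`. -/
def gact (lam : ℝ) (v : ℤ × ℝ) (x : ℝ) : ℝ := lam ^ v.1 * x + v.2

lemma gmul_assoc (h0 : lam ≠ 0) (u v w : ℤ × ℝ) :
    gmul lam (gmul lam u v) w = gmul lam u (gmul lam v w) := by
  ext
  · simp only [gmul, add_assoc]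
  · simp only [gmul, zpow_add₀ h0]
    ring

lemma ginv_gmul (h0 : lam ≠ 0) (u v : ℤ × ℝ) :
    ginv lam (gmul lam u v) = gmul lam (ginv lam v) (ginv lam u) := by
  ext
  · simp only [gmul, ginv, neg_add_rev]
  · simp only [gmul, ginv, neg_add, zpow_add₀ h0]
    have hu : lam ^ (-u.1) * lam ^ u.1 = 1 := by rw [← zpow_add₀ h0, neg_add_cancel, zpow_zero]
    linear_combination (-(lam ^ (-v.1) * v.2)) * hu

lemma gact_gmul (h0 : lam ≠ 0) (u v : ℤ × ℝ) (x : ℝ) :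
    gact lam (gmul lam u v) x = gact lam u (gact lam v x) := by
  simp only [gact, gmul, zpow_add₀ h0]
  ring

lemma gact_ginv_eq_iff (h0 : lam ≠ 0) {u : ℤ × ℝ} {x y : ℝ} :
    gact lam (ginv lam u) x = y ↔ x = gact lam u y := by
  have hu : lam ^ u.1 ≠ 0 := zpow_ne_zero _ h0
  simp only [gact, ginv, zpow_neg]
  rw [← mul_neg, ← mul_add, inv_mul_eq_iff_eq_mul₀ hu, ← sub_eq_add_neg, sub_eq_iff_eq_add]

lemma gact_sub_gact (v : ℤ × ℝ) (x y : ℝ) :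
    gact lam v x - gact lam v y = lam ^ v.1 * (x - y) := by
  simp only [gact]
  ring

end Group

section Words

variable {lam : ℝ} {p : Fin m → ℕ} {b : Fin m → ℝ}

lemma wordP_cons (i : Fin m) (σ : List (Fin m)) : wordP p (i :: σ) = p i + wordP p σ := by
  simp [wordP]

lemma wordP_singleton (i : Fin m) : wordP p [i] = p i := by simp [wordP]

lemma wordP_append (σ τ : List (Fin m)) : wordP p (σ ++ τ) = wordP p σ + wordP p τ := by
  simp [wordP]

lemma wordB_cons (i : Fin m) (σ : List (Fin m)) :
    wordB lam p b (i :: σ) = lam ^ p i * wordB lam p b σ + b i := rfl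

lemma SW_append (σ τ : List (Fin m)) (x : ℝ) :
    SW lam p b (σ ++ τ) x = SW lam p b σ (SW lam p b τ x) := by
  induction σ with
  | nil => rfl
  | cons i σ ih => exact congrArg (Smap lam p b i) ih

lemma SW_eq_gact (σ : List (Fin m)) (x : ℝ) :
    SW lam p b σ x = gact lam (elem lam p b σ) x := by
  induction σ with
  | nil => simp [SW, gact, elem, wordP, wordB]
  | cons i σ ih =>
    change lam ^ p i * SW lam p b σ x + b i = _
    simp only [ih, gact, elem, zpow_natCast, wordP_cons, wordB_cons]
    ring

lemma continuous_SW (σ : List (Fin m)) : Continuous (SW lam p b σ) := by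
  simp only [funext (SW_eq_gact σ)]
  exact (continuous_const_mul _).add_const _

lemma elem_append (σ τ : List (Fin m)) :
    elem lam p b (σ ++ τ) = gmul lam (elem lam p b σ) (elem lam p b τ) := by
  ext
  · simp only [elem, gmul, wordP_append, Nat.cast_add]
  · change SW lam p b (σ ++ τ) 0 = _
    rw [SW_append, SW_eq_gact]
    rfl

/-- The element `(elem σ)⁻¹ (elem τ)`, which acts as `S_σ⁻¹ ∘ S_τ`: the relative position of the
pieces `S_σ(E)` and `S_τ(E)`. -/
def relElem (lam : ℝ) (p : Fin m → ℕ) (b : Fin m → ℝ) (σ τ : List (Fin m)) : ℤ × ℝ :=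
  gmul lam (ginv lam (elem lam p b σ)) (elem lam p b τ)

lemma relElem_fst (σ τ : List (Fin m)) :
    (relElem lam p b σ τ).1 = (wordP p τ : ℤ) - wordP p σ := by
  simp only [relElem, gmul, ginv, elem]
  ring

lemma relElem_snd (σ τ : List (Fin m)) :
    (relElem lam p b σ τ).2 =
      lam ^ (-(wordP p σ : ℤ)) * (wordB lam p b τ - wordB lam p b σ) := by
  simp only [relElem, gmul, ginv, elem]
  ring

lemma relElem_singleton (i j : Fin m) :
    relElem lam p b [i] [j] =
      ((p j : ℤ) - (p i : ℤ), lam ^ (-(p i : ℤ)) * (b j - b i)) := by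
  ext
  · simp only [relElem_fst, wordP_singleton]
  · simp [relElem_snd, wordP_singleton, wordB, SW, Smap]

lemma relElem_append (h0 : lam ≠ 0) (σ τ β α : List (Fin m)) :
    relElem lam p b (σ ++ β) (τ ++ α) =
      gmul lam (ginv lam (elem lam p b β)) (gmul lam (relElem lam p b σ τ) (elem lam p b α)) := by
  simp only [relElem, elem_append, ginv_gmul h0, gmul_assoc h0]

lemma gact_relElem_eq_iff (h0 : lam ≠ 0) {σ τ : List (Fin m)} {x y : ℝ} :
    gact lam (relElem lam p b σ τ) x = y ↔ SW lam p b τ x = SW lam p b σ y := by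
  rw [relElem, gact_gmul h0, gact_ginv_eq_iff h0, SW_eq_gact, SW_eq_gact]

lemma image_SW_inter_nonempty_iff (h0 : lam ≠ 0) {E : Set ℝ} {σ τ : List (Fin m)} :
    (SW lam p b σ '' E ∩ SW lam p b τ '' E).Nonempty ↔
      ∃ x ∈ E, gact lam (relElem lam p b σ τ) x ∈ E := by
  constructor
  · rintro ⟨z, ⟨y, hy, hyz⟩, ⟨x, hx, hxz⟩⟩
    exact ⟨x, hx, (gact_relElem_eq_iff h0).2 (hxz.trans hyz.symm) ▸ hy⟩
  · rintro ⟨x, hx, hy⟩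
    exact ⟨SW lam p b τ x, ⟨_, hy, ((gact_relElem_eq_iff h0).1 rfl).symm⟩, x, hx, rfl⟩

lemma not_SSC_iff {E : Set ℝ} :
    ¬ SSC lam p b E ↔ ∃ i j, i ≠ j ∧ (SW lam p b [i] '' E ∩ SW lam p b [j] '' E).Nonempty := by
  simp only [SSC, not_forall, ← ne_eq, ← Set.nonempty_iff_ne_empty, exists_prop]
  rfl

lemma SW_sub_SW (h0 : lam ≠ 0) (σ τ : List (Fin m)) (x : ℝ) :
    SW lam p b τ x - SW lam p b σ x =
      lam ^ wordP p σ * (gact lam (relElem lam p b σ τ) x - x) := by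
  rw [(gact_relElem_eq_iff h0).1 rfl, SW_eq_gact, SW_eq_gact, gact_sub_gact]
  simp only [elem, zpow_natCast]

lemma ginv_elem_gmul_elem_fst (u : ℤ × ℝ) (α β : List (Fin m)) :
    (gmul lam (ginv lam (elem lam p b β)) (gmul lam u (elem lam p b α))).1 =
      (wordP p α : ℤ) + u.1 - (wordP p β : ℤ) := by
  simp only [gmul, ginv, elem]
  ring

lemma ginv_elem_gmul_elem_snd (h0 : lam ≠ 0) (u : ℤ × ℝ) (α β : List (Fin m)) :
    (gmul lam (ginv lam (elem lam p b β)) (gmul lam u (elem lam p b α))).2 =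
      lam ^ (-(wordP p β : ℤ)) * u.2 + lam ^ (u.1 - (wordP p β : ℤ)) * wordB lam p b α
        - lam ^ (-(wordP p β : ℤ)) * wordB lam p b β := by
  simp only [gmul, ginv, elem, sub_eq_add_neg u.1, zpow_add₀ h0]
  ring

lemma edge_iff (h0 : lam ≠ 0) {T : ℕ} {u v : ℤ × ℝ} :
    edge lam p b T u v ↔ u ∈ Xi lam b T ∧ v ∈ Xi lam b T ∧
      ∃ α β : List (Fin m), wordP p α ∈ Set.Icc 1 (2 * T - 1) ∧
        wordP p β ∈ Set.Icc 1 (2 * T - 1) ∧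
        v = gmul lam (ginv lam (elem lam p b β)) (gmul lam u (elem lam p b α)) := by
  simp only [edge, Prod.ext_iff, ginv_elem_gmul_elem_fst, ginv_elem_gmul_elem_snd h0, Set.mem_Icc,
    and_assoc]

end Words

section Translations

variable {lam : ℝ} {p : Fin m → ℕ} {b : Fin m → ℝ}

lemma eval_inv_reflect_mul_pow {K : Type*} [Field K] {x : K} (hx : x ≠ 0) {N : ℕ} {P : K[X]}
    (hP : P.natDegree ≤ N) : (reflect N P).eval x⁻¹ * x ^ N = P.eval x := by
  let := invertibleOfNonzero hx
  simpa only [invOf_eq_inv, eval₂_id] using eval₂_reflect_mul_pow (RingHom.id K) x N P hP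

/-- The polynomial with coefficients in `B` whose value at `λ` is `b_σ`. -/
def wordPoly (p : Fin m → ℕ) (b : Fin m → ℝ) : List (Fin m) → ℝ[X]
  | [] => 0
  | i :: σ => X ^ p i * wordPoly p b σ + C (b i)

lemma eval_wordPoly (σ : List (Fin m)) : (wordPoly p b σ).eval lam = wordB lam p b σ := by
  induction σ with
  | nil => simp [wordPoly, wordB, SW]
  | cons i σ ih => simp [wordPoly, wordB_cons, ih]

lemma coeff_wordPoly_mem (hp : ∀ i, 1 ≤ p i) (σ : List (Fin m)) (n : ℕ) :
    (wordPoly p b σ).coeff n ∈ Bset b := by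
  induction σ generalizing n with
  | nil => exact Or.inl (coeff_zero n)
  | cons i σ ih =>
    rw [wordPoly, coeff_add, coeff_X_pow_mul', coeff_C]
    obtain rfl | hn := eq_or_ne n 0
    · rw [if_neg (by have := hp i; omega), if_pos rfl, zero_add]
      exact Or.inr ⟨i, rfl⟩
    · rw [if_neg hn, add_zero]
      split_ifs
      · exact ih _
      · exact Or.inl rfl

lemma coeff_wordPoly_eq_zero (hp : ∀ i, 1 ≤ p i) {σ : List (Fin m)} {n : ℕ}
    (hn : wordP p σ ≤ n) : (wordPoly p b σ).coeff n = 0 := by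
  induction σ generalizing n with
  | nil => exact coeff_zero n
  | cons i σ ih =>
    have hi := hp i
    rw [wordP_cons] at hn
    rw [wordPoly, coeff_add, coeff_X_pow_mul', coeff_C_of_ne_zero (by omega), if_pos (by omega),
      ih (by omega), add_zero]

lemma exists_polynomial_relElem_snd (h0 : lam ≠ 0) (hp : ∀ i, 1 ≤ p i) {T : ℕ}
    {σ τ : List (Fin m)} (hσ : 1 ≤ wordP p σ)
    (hT : |(relElem lam p b σ τ).1| ≤ (T : ℤ) - 1) :
    ∃ R : ℝ[X], (∀ n, R.coeff n ∈ BB b) ∧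
      lam ^ (2 - (T : ℤ)) * (relElem lam p b σ τ).2 = R.eval lam⁻¹ := by
  rw [relElem_fst, abs_le] at hT
  obtain ⟨N, hN⟩ : ∃ N, N + 2 = wordP p σ + T := ⟨wordP p σ + T - 2, by omega⟩
  set P := wordPoly p b τ - wordPoly p b σ with hP
  have hdeg : P.natDegree ≤ N := by
    rw [natDegree_le_iff_coeff_eq_zero]
    intro n hn
    rw [hP, coeff_sub, coeff_wordPoly_eq_zero hp (by omega), coeff_wordPoly_eq_zero hp (by omega),
      sub_zero]
  refine ⟨reflect N P, fun n => ?_, mul_right_cancel₀ (pow_ne_zero N h0) ?_⟩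
  · rw [coeff_reflect, coeff_sub]
    exact ⟨_, coeff_wordPoly_mem hp τ _, _, coeff_wordPoly_mem hp σ _, rfl⟩
  · have hexp : lam ^ (2 - (T : ℤ)) * lam ^ (-(wordP p σ : ℤ)) * lam ^ N = 1 := by
      rw [← zpow_natCast, ← zpow_add₀ h0, ← zpow_add₀ h0, ← zpow_zero lam]
      congr 1
      omega
    rw [eval_inv_reflect_mul_pow h0 hdeg, hP, eval_sub, eval_wordPoly, eval_wordPoly, relElem_snd]
    linear_combination (wordB lam p b τ - wordB lam p b σ) * hexp

end Translations

section Attractor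

variable {lam : ℝ} {p : Fin m → ℕ} {b : Fin m → ℝ} {E : Set ℝ}

lemma SW_mem (hE : ⋃ i, Smap lam p b i '' E ⊆ E) {x : ℝ} (hx : x ∈ E) (σ : List (Fin m)) :
    SW lam p b σ x ∈ E := by
  induction σ with
  | nil => exact hx
  | cons i σ ih => exact hE (Set.mem_iUnion.2 ⟨i, _, ih, rfl⟩)

lemma SW_append_mem_image (hE : ⋃ i, Smap lam p b i '' E ⊆ E) {x : ℝ} (hx : x ∈ E)
    (σ τ : List (Fin m)) : SW lam p b (σ ++ τ) x ∈ SW lam p b σ '' E :=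
  ⟨_, SW_mem hE hx τ, (SW_append σ τ x).symm⟩

lemma exists_mem_image_SW (hp : ∀ i, 1 ≤ p i) {T : ℕ} (hT : ∀ i, p i ≤ T)
    (hE : E ⊆ ⋃ i, Smap lam p b i '' E) {x : ℝ} (hx : x ∈ E) (N : ℕ) :
    ∃ σ, wordP p σ ∈ Set.Ioc N (N + T) ∧ x ∈ SW lam p b σ '' E := by
  induction N with
  | zero =>
    obtain ⟨i, hi⟩ := Set.mem_iUnion.1 (hE hx)
    refine ⟨[i], ?_, hi⟩
    rw [wordP_singleton, zero_add]
    exact ⟨hp i, hT i⟩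
  | succ N ih =>
    obtain ⟨σ, ⟨hlt, hle⟩, y, hy, rfl⟩ := ih
    by_cases hσ : N + 1 < wordP p σ
    · exact ⟨σ, ⟨hσ, by omega⟩, y, hy, rfl⟩
    · obtain ⟨i, z, hz, rfl⟩ := Set.mem_iUnion.1 (hE hy)
      have hi := hp i
      have hiT := hT i
      refine ⟨σ ++ [i], ?_, z, hz, SW_append σ [i] z⟩
      rw [wordP_append, wordP_singleton]
      exact ⟨by omega, by omega⟩

lemma exists_balanced_words (hp : ∀ i, 1 ≤ p i) {T : ℕ} (hT : ∀ i, p i ≤ T)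
    (hE : E ⊆ ⋃ i, Smap lam p b i '' E) {q : ℤ} (hq : |q| ≤ (T : ℤ) - 1) {x y : ℝ}
    (hx : x ∈ E) (hy : y ∈ E) :
    ∃ α β : List (Fin m), wordP p α ∈ Set.Icc 1 (2 * T - 1) ∧
      wordP p β ∈ Set.Icc 1 (2 * T - 1) ∧
      |(wordP p α : ℤ) + q - wordP p β| ≤ (T : ℤ) - 1 ∧
      x ∈ SW lam p b α '' E ∧ y ∈ SW lam p b β '' E := by
  wlog hq0 : 0 ≤ q generalizing q x y
  · obtain ⟨β, α, hβ, hα, hbal, hyβ, hxα⟩ := this (q := -q) (by rwa [abs_neg]) hy hx (by omega)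
    refine ⟨α, β, hα, hβ, ?_, hxα, hyβ⟩
    rwa [← abs_neg, show -((wordP p α : ℤ) + q - wordP p β) = wordP p β + -q - wordP p α by ring]
  rw [abs_le] at hq
  obtain ⟨α, ⟨hα, hαT⟩, hxα⟩ := exists_mem_image_SW hp hT hE hx 0
  obtain ⟨β, ⟨hβ, hβT⟩, hyβ⟩ :=
    exists_mem_image_SW hp hT hE hy ((wordP p α : ℤ) + q - T).toNat
  exact ⟨α, β, ⟨by omega, by omega⟩, ⟨by omega, by omega⟩, abs_le.2 ⟨by omega, by omega⟩,
    hxα, hyβ⟩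

lemma abs_le_bmax (b : Fin m → ℝ) (i : Fin m) : |b i| ≤ bmax b :=
  le_ciSup (f := fun i => |b i|) (Set.finite_range _).bddAbove i

lemma abs_le_of_mem_attractor (hlam0 : 0 < lam) (hlam1 : lam < 1) (hp : ∀ i, 1 ≤ p i)
    (hEc : IsCompact E) (hE : E ⊆ ⋃ i, Smap lam p b i '' E) {x : ℝ} (hx : x ∈ E) :
    |x| ≤ bmax b / (1 - lam) := by
  obtain ⟨z, hz, hmax⟩ := hEc.exists_isMaxOn ⟨x, hx⟩ continuous_abs.continuousOn
  obtain ⟨i, y, hy, hyz⟩ := Set.mem_iUnion.1 (hE hz)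
  have hpow : lam ^ p i ≤ lam := pow_le_of_le_one hlam0.le hlam1.le (by have := hp i; omega)
  have hyz_abs : |y| ≤ |z| := hmax hy
  have hb := abs_le_bmax b i
  have hz_le : |z| ≤ lam * |z| + bmax b :=
    calc |z| = |lam ^ p i * y + b i| := by rw [← hyz, Smap]
      _ ≤ |lam ^ p i * y| + |b i| := abs_add_le _ _
      _ = lam ^ p i * |y| + |b i| := by rw [abs_mul, abs_of_pos (pow_pos hlam0 _)]
      _ ≤ lam * |z| + bmax b := by gcongr
  refine (hmax hx).trans ?_
  rw [le_div_iff₀ (sub_pos.2 hlam1)]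
  linarith

end Attractor

section Overlap

variable {lam : ℝ} {p : Fin m → ℕ} {b : Fin m → ℝ} {E : Set ℝ} {T : ℕ} {v : ℤ × ℝ}

/-- The relative position `v` of two intersecting pieces `S_σ(E)` and `S_τ(E)`, `σ` nonempty, whose
scaling exponents differ by less than `T`. That the pieces intersect is expressed as
`v • E ∩ E ≠ ∅`. These are the vertices of `G` visited by the paths built from a common point. -/
structure IsOverlap (lam : ℝ) (p : Fin m → ℕ) (b : Fin m → ℝ) (T : ℕ) (E : Set ℝ)
    (v : ℤ × ℝ) : Prop where
  abs_fst_le : |v.1| ≤ (T : ℤ) - 1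
  exists_words : ∃ σ τ, 1 ≤ wordP p σ ∧ v = relElem lam p b σ τ
  exists_mem : ∃ x ∈ E, gact lam v x ∈ E

lemma zpow_le_zpow_one_sub (hlam0 : 0 < lam) (hlam1 : lam < 1) {q : ℤ} (hq : |q| ≤ (T : ℤ) - 1) :
    lam ^ q ≤ lam ^ (1 - (T : ℤ)) :=
  zpow_le_zpow_right_of_le_one₀ hlam0 hlam1.le (by rw [abs_le] at hq; omega)

lemma abs_snd_le_of_gact_mem (hlam0 : 0 < lam) (hlam1 : lam < 1) (hp : ∀ i, 1 ≤ p i)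
    (hEc : IsCompact E) (hE : E ⊆ ⋃ i, Smap lam p b i '' E) (hv : |v.1| ≤ (T : ℤ) - 1) {x : ℝ}
    (hx : x ∈ E) (hvx : gact lam v x ∈ E) :
    |v.2| ≤ (1 + lam ^ (1 - (T : ℤ))) * bmax b / (1 - lam) := by
  have hpow := zpow_le_zpow_one_sub hlam0 hlam1 hv
  have hx_le := abs_le_of_mem_attractor hlam0 hlam1 hp hEc hE hx
  have hvx_le := abs_le_of_mem_attractor hlam0 hlam1 hp hEc hE hvx
  calc |v.2| = |gact lam v x - lam ^ v.1 * x| := by rw [gact, add_sub_cancel_left]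
    _ ≤ |gact lam v x| + |lam ^ v.1 * x| := abs_sub _ _
    _ = |gact lam v x| + lam ^ v.1 * |x| := by rw [abs_mul, abs_of_pos (zpow_pos hlam0 _)]
    _ ≤ bmax b / (1 - lam) + lam ^ (1 - (T : ℤ)) * (bmax b / (1 - lam)) := by gcongr
    _ = (1 + lam ^ (1 - (T : ℤ))) * bmax b / (1 - lam) := by ring

lemma IsOverlap.mem_Xi (hv : IsOverlap lam p b T E v) (hlam0 : 0 < lam) (hlam1 : lam < 1)
    (hp : ∀ i, 1 ≤ p i) (hEc : IsCompact E) (hE : E ⊆ ⋃ i, Smap lam p b i '' E) :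
    v ∈ Xi lam b T := by
  obtain ⟨hv1, ⟨σ, τ, hσ, rfl⟩, x, hx, hvx⟩ := hv
  exact ⟨hv1, abs_snd_le_of_gact_mem hlam0 hlam1 hp hEc hE hv1 hx hvx,
    exists_polynomial_relElem_snd hlam0.ne' hp hσ hv1⟩

lemma IsOverlap.exists_edge (hv : IsOverlap lam p b T E v) (hlam0 : 0 < lam) (hlam1 : lam < 1)
    (hp : ∀ i, 1 ≤ p i) (hT : ∀ i, p i ≤ T) (hEc : IsCompact E)
    (hE : E ⊆ ⋃ i, Smap lam p b i '' E) :
    ∃ w, IsOverlap lam p b T E w ∧ edge lam p b T v w := by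
  have h0 := hlam0.ne'
  obtain ⟨x, hx, hvx⟩ := hv.exists_mem
  obtain ⟨σ, τ, hσ, hvστ⟩ := hv.exists_words
  obtain ⟨α, β, hα, hβ, hbal, ⟨x', hx', hxα⟩, y', hy', hyβ⟩ :=
    exists_balanced_words hp hT hE hv.abs_fst_le hx hvx
  set w := gmul lam (ginv lam (elem lam p b β)) (gmul lam v (elem lam p b α)) with hw
  have hw_act : gact lam w x' = y' := by
    rw [gact_gmul h0, gact_ginv_eq_iff h0, gact_gmul h0, ← SW_eq_gact, ← SW_eq_gact, hxα, hyβ]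
  have hw_overlap : IsOverlap lam p b T E w :=
    { abs_fst_le := by rwa [hw, ginv_elem_gmul_elem_fst]
      exists_words := ⟨σ ++ β, τ ++ α, by rw [wordP_append]; omega,
        by rw [relElem_append h0, ← hvστ]⟩
      exists_mem := ⟨x', hx', hw_act ▸ hy'⟩ }
  exact ⟨w, hw_overlap, (edge_iff h0).2 ⟨hv.mem_Xi hlam0 hlam1 hp hEc hE,
    hw_overlap.mem_Xi hlam0 hlam1 hp hEc hE, α, β, hα, hβ, hw⟩⟩

lemma IsOverlap.exists_path (hv : IsOverlap lam p b T E v) (hlam0 : 0 < lam) (hlam1 : lam < 1)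
    (hp : ∀ i, 1 ≤ p i) (hT : ∀ i, p i ≤ T) (hEc : IsCompact E)
    (hE : E ⊆ ⋃ i, Smap lam p b i '' E) :
    ∃ f : ℕ → ℤ × ℝ, f 0 = v ∧ ∀ n, edge lam p b T (f n) (f (n + 1)) := by
  refine (not_acc_iff_exists_descending_chain (r := flip (edge lam p b T))).1 fun hacc => ?_
  induction hacc with
  | intro v _ ih =>
    obtain ⟨w, hw, hvw⟩ := hv.exists_edge hlam0 hlam1 hp hT hEc hE
    exact ih w hvw hw

end Overlap

section Path

variable {lam : ℝ} {p : Fin m → ℕ} {b : Fin m → ℝ} {E : Set ℝ} {T : ℕ} {σ τ : List (Fin m)}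
  {f : ℕ → ℤ × ℝ}

lemma exists_words_of_path (h0 : lam ≠ 0) (hf0 : f 0 = relElem lam p b σ τ)
    (hf : ∀ n, edge lam p b T (f n) (f (n + 1))) (n : ℕ) :
    ∃ β α : List (Fin m), n ≤ wordP p β ∧ f n = relElem lam p b (σ ++ β) (τ ++ α) := by
  induction n with
  | zero => exact ⟨[], [], Nat.zero_le _, by rw [hf0, List.append_nil, List.append_nil]⟩
  | succ n ih =>
    obtain ⟨β, α, hβ, hfn⟩ := ih
    obtain ⟨-, -, α', β', -, ⟨hβ', -⟩, hfn'⟩ := (edge_iff h0).1 (hf n)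
    refine ⟨β ++ β', α ++ α', by rw [wordP_append]; omega, ?_⟩
    rw [hfn', hfn, ← relElem_append h0, List.append_assoc, List.append_assoc]

lemma exists_abs_gact_sub_le (hlam0 : 0 < lam) (hlam1 : lam < 1) (b : Fin m → ℝ) (T : ℕ) (x : ℝ) :
    ∃ K, ∀ v ∈ Xi lam b T, |gact lam v x - x| ≤ K := by
  refine ⟨lam ^ (1 - (T : ℤ)) * |x| + (1 + lam ^ (1 - (T : ℤ))) * bmax b / (1 - lam) + |x|,
    fun v hv => ?_⟩
  have hpow := zpow_le_zpow_one_sub hlam0 hlam1 hv.1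
  have hsnd := hv.2.1
  calc |gact lam v x - x| ≤ |lam ^ v.1 * x + v.2| + |x| := abs_sub _ _
    _ ≤ |lam ^ v.1 * x| + |v.2| + |x| := by gcongr; exact abs_add_le _ _
    _ = lam ^ v.1 * |x| + |v.2| + |x| := by rw [abs_mul, abs_of_pos (zpow_pos hlam0 _)]
    _ ≤ _ := by gcongr

lemma image_SW_inter_nonempty_of_path (hlam0 : 0 < lam) (hlam1 : lam < 1) (hEc : IsCompact E)
    (hEne : E.Nonempty) (hE : ⋃ i, Smap lam p b i '' E ⊆ E) (hf0 : f 0 = relElem lam p b σ τ)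
    (hf : ∀ n, edge lam p b T (f n) (f (n + 1))) :
    (SW lam p b σ '' E ∩ SW lam p b τ '' E).Nonempty := by
  obtain ⟨x, hx⟩ := hEne
  obtain ⟨K, hK⟩ := exists_abs_gact_sub_le hlam0 hlam1 b T x
  refine inter_nonempty_of_forall_exists_dist_lt (hEc.image (continuous_SW σ))
    (hEc.image (continuous_SW τ)).isClosed fun ε hε => ?_
  have hlim : Tendsto (fun n => lam ^ n * K) atTop (nhds 0) := by
    simpa using (tendsto_pow_atTop_nhds_zero_of_lt_one hlam0.le hlam1).mul_const K
  obtain ⟨n, hn⟩ := (hlim.eventually_lt_const hε).exists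
  obtain ⟨β, α, hβ, hfn⟩ := exists_words_of_path hlam0.ne' hf0 hf n
  refine ⟨_, SW_append_mem_image hE hx σ β, _, SW_append_mem_image hE hx τ α, lt_of_le_of_lt ?_ hn⟩
  have hpow : lam ^ wordP p (σ ++ β) ≤ lam ^ n :=
    pow_le_pow_of_le_one hlam0.le hlam1.le (by rw [wordP_append]; omega)
  rw [dist_comm, Real.dist_eq, SW_sub_SW hlam0.ne', ← hfn, abs_mul, abs_of_pos (pow_pos hlam0 _)]
  exact mul_le_mul hpow (hK _ (hf n).1) (abs_nonneg _) (pow_nonneg hlam0.le n)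

theorem image_SW_inter_nonempty_iff_exists_path (hlam0 : 0 < lam) (hlam1 : lam < 1)
    (hp : ∀ i, 1 ≤ p i) (hT : ∀ i, p i ≤ T) (hEc : IsCompact E) (hEne : E.Nonempty)
    (hEfix : E = ⋃ i, Smap lam p b i '' E) (hσ : 1 ≤ wordP p σ)
    (hστ : |(wordP p τ : ℤ) - wordP p σ| ≤ (T : ℤ) - 1) :
    (SW lam p b σ '' E ∩ SW lam p b τ '' E).Nonempty ↔
      ∃ f : ℕ → ℤ × ℝ, f 0 = relElem lam p b σ τ ∧ ∀ n, edge lam p b T (f n) (f (n + 1)) := by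
  constructor
  · intro hmeet
    have hv : IsOverlap lam p b T E (relElem lam p b σ τ) :=
      { abs_fst_le := by rwa [relElem_fst]
        exists_words := ⟨σ, τ, hσ, rfl⟩
        exists_mem := (image_SW_inter_nonempty_iff hlam0.ne').1 hmeet }
    exact hv.exists_path hlam0 hlam1 hp hT hEc hEfix.subset
  · rintro ⟨f, hf0, hf⟩
    exact image_SW_inter_nonempty_of_path hlam0 hlam1 hEc hEne hEfix.symm.subset hf0 hf

end Path

theorem stmt12_general (lam : ℝ) (hlam0 : 0 < lam) (hlam1 : lam < 1)
    {m : ℕ} (p : Fin m → ℕ) (hp : ∀ i, 1 ≤ p i) (b : Fin m → ℝ)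
    (T : ℕ) (hT : ∀ i, p i ≤ T)
    (E : Set ℝ) (hEc : IsCompact E) (hEne : E.Nonempty)
    (hEfix : E = ⋃ i, Smap lam p b i '' E) :
    ¬ SSC lam p b E ↔
      ∃ v ∈ Lam lam p b T, ∃ f : ℕ → ℤ × ℝ,
        f 0 = v ∧ (∀ n : ℕ, f n ∈ Xi lam b T) ∧
        ∀ n : ℕ, edge lam p b T (f n) (f (n + 1)) := by
  have meet_iff (i j : Fin m) := image_SW_inter_nonempty_iff_exists_path (σ := [i]) (τ := [j])
    hlam0 hlam1 hp hT hEc hEne hEfix (by rw [wordP_singleton]; exact hp i)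
    (by
      have := hp i; have := hp j; have := hT i; have := hT j
      rw [wordP_singleton, wordP_singleton, abs_le]
      omega)
  simp only [not_SSC_iff, meet_iff, relElem_singleton]
  constructor
  · rintro ⟨i, j, hij, f, hf0, hf⟩
    exact ⟨f 0, ⟨(hf 0).1, i, j, hij, hf0⟩, f, rfl, fun n => (hf n).1, hf⟩
  · rintro ⟨v, ⟨-, i, j, hij, hv⟩, f, hf0, -, hf⟩
    exact ⟨i, j, hij, f, hf0.trans hv, hf⟩

theorem stmt12 (lam : ℝ) (hlam0 : 0 < lam) (hlam1 : lam < 1)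
    (hPisot : IsPisot lam⁻¹)
    {m : ℕ} (hm : 2 ≤ m) (p : Fin m → ℕ) (hp : ∀ i, 1 ≤ p i)
    (b : Fin m → ℝ) (hbZ : ∀ i, ∃ z : ℤ, b i = (z : ℝ))
    (T : ℕ) (hT : T = Finset.univ.sup p)
    (E : Set ℝ) (hEc : IsCompact E) (hEne : E.Nonempty)
    (hEfix : E = ⋃ i, Smap lam p b i '' E) :
    ¬ SSC lam p b E ↔
      ∃ v ∈ Lam lam p b T, ∃ f : ℕ → ℤ × ℝ,
        f 0 = v ∧ (∀ n : ℕ, f n ∈ Xi lam b T) ∧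
        ∀ n : ℕ, edge lam p b T (f n) (f (n + 1)) := by
  exact stmt12_general lam hlam0 hlam1 p hp b T
    (fun i => hT ▸ Finset.le_sup (Finset.mem_univ i)) E hEc hEne hEfix

end PVOSC
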